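/- Let 0 ≤ k < n and let ρ, ρ′ be two measures on partitions of n with equal total mass such that ρ stochastically dominates ρ′ with respect to the dominance order. Then π^n_k ρ stochastically dominates π^n_k ρ′ on partitions of k. -/

import Mathlib

open scoped BigOperators

def isPartition (f : ℕ → ℕ) : Prop :=
  (∀ ⦃a b : ℕ⦄, a ≤ b → f b ≤ f a) ∧ ∃ N, ∀ a, N ≤ a → f a = 0

noncomputable def psize (f : ℕ → ℕ) : ℕ := ∑ᶠ a, f a

def addBox (mu lam : ℕ → ℕ) : Prop := ∃ r, lam = Function.update mu r (mu r + 1)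

noncomputable def dimY (lam : ℕ → ℕ) : ℕ :=
  Set.ncard { p : ℕ → ℕ → ℕ |
    p 0 = (fun _ => 0) ∧ (∀ k, isPartition (p k)) ∧
    (∀ k, k < psize lam → addBox (p k) (p (k + 1))) ∧
    (∀ k, psize lam ≤ k → p k = lam) }

def dominates (lam mu : ℕ → ℕ) : Prop :=
  ∀ k, ∑ a ∈ Finset.range k, mu a ≤ ∑ a ∈ Finset.range k, lam a

def moveBox (lam hatlam : ℕ → ℕ) (i hi : ℕ) : Prop :=
  lam i = hatlam i + 1 ∧ hatlam hi = lam hi + 1 ∧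
  ∀ a, a ≠ i → a ≠ hi → lam a = hatlam a

noncomputable def schurOnes (N : ℕ) (lam : ℕ → ℕ) : ℕ :=
  Set.ncard { T : ℕ → ℕ → ℕ |
    (∀ i j, j < lam i → 1 ≤ T i j ∧ T i j ≤ N) ∧
    (∀ i j, j + 1 < lam i → T i j ≤ T i (j + 1)) ∧
    (∀ i j, j < lam (i + 1) → T i j < T (i + 1) j) ∧
    (∀ i j, lam i ≤ j → T i j = 0) }

noncomputable def projStep (rho : (ℕ → ℕ) → ℝ) : (ℕ → ℕ) → ℝ :=
  fun mu => ∑ᶠ l ∈ { l : ℕ → ℕ | addBox mu l }, ((dimY mu : ℝ) / (dimY l : ℝ)) * rho l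

def isMeasureOn (m : ℕ) (rho : (ℕ → ℕ) → ℝ) : Prop :=
  (∀ f, 0 ≤ rho f) ∧ ∀ f, rho f ≠ 0 → isPartition f ∧ psize f = m

def stochDom (m : ℕ) (rho rho' : (ℕ → ℕ) → ℝ) : Prop :=
  ∀ U : Set (ℕ → ℕ),
    (∀ a ∈ U, ∀ b, isPartition b → psize b = m → dominates b a → b ∈ U) →
    ∑ᶠ f ∈ U, rho' f ≤ ∑ᶠ f ∈ U, rho f

/-!
Projecting the unit mass at a partition `λ` of `n` one level down removes a random box of `λ`, and a
measure `ρ` is projected by averaging over `λ`, so it suffices that the mass `G(λ)` which the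
projection of `λ` gives to a dominance-upper set is monotone in `λ`: the superlevel sets of `G` are
then upper sets and `∑ G ρ` is a positive combination of the masses `ρ {G ≥ t}`.

With `x_j = λ_j + N - 1 - j`, the Frobenius formula `dim λ = n! ∏_{i < j} (x_i - x_j) / ∏ x_i!`
gives the box in row `r` the probability `(x_r / n) ∏_{j ≠ r} (1 - 1 / (x_r - x_j))`. The dominance
order is generated by moving one box up, from a row `i` to a row `h < i`; this shifts `x_h` up and
`x_i` down by one. Since `u ↦ log (1 - 1 / u)` is concave on `u > 1` and convex on `u < 0`, such a
move lowers the removal probabilities of the rows above `h` and raises those of the rows below `i`.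
Hence the probability that the removed box lies in row `t` or below does not decrease, for `t ≤ h`
and for `t > i`. These cases are enough: removing a box from a row between `h` and `i` after the
move yields a partition dominating every one obtained by removing such a box before it.
-/

open Finset

theorem sum_mul_nonneg_of_superlevel {α R : Type*} [CommRing R] [LinearOrder R]
    [IsStrictOrderedRing R] (s : Finset α) (g d : α → R) {c : R} (hc : ∀ x ∈ s, c ≤ g x)
    (hd : ∀ t > c, 0 ≤ ∑ x ∈ s with t ≤ g x, d x) :
    0 ≤ ∑ x ∈ s, (g x - c) * d x := by
  classical
  induction s using Finset.induction_on_min_value g generalizing c with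
  | empty => simp
  | insert a s ha hmin ih =>
    have hca : c ≤ g a := hc a (mem_insert_self a s)
    have split : ∑ x ∈ insert a s, (g x - c) * d x =
        ∑ x ∈ s, (g x - g a) * d x + (g a - c) * ∑ x ∈ insert a s, d x := by
      rw [sum_insert ha, sum_insert ha, mul_add, mul_sum, add_left_comm, ← sum_add_distrib]
      exact congrArg _ (sum_congr rfl fun x _ ↦ by ring)
    rw [split]
    refine add_nonneg (ih hmin fun t ht ↦ ?_) ?_
    · simpa [filter_insert, ht.not_ge] using hd t (hca.trans_lt ht)
    · obtain rfl | hlt := hca.eq_or_lt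
      · simp
      · refine mul_nonneg (sub_nonneg.mpr hca) ?_
        simpa [filter_insert, filter_true_of_mem hmin] using hd (g a) hlt

section Determinants

open Matrix Polynomial

theorem sum_det_updateRow_mul {ι R : Type*} [Fintype ι] [DecidableEq ι] [CommRing R]
    (M : Matrix ι ι R) (d : ι → R) :
    ∑ r, (M.updateRow r (M r * d)).det = (∑ j, d j) * M.det := by
  have expand (r : ι) : (M.updateRow r (M r * d)).det = ∑ j, d j * (M.adjugate j r * M r j) := by
    rw [← cramer_transpose_apply, cramer_eq_adjugate_mulVec, ← adjugate_transpose]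
    exact sum_congr rfl fun j _ ↦ by simp only [transpose_apply, Pi.mul_apply]; ring
  have diagonal (j : ι) : ∑ r, M.adjugate j r * M r j = M.det := by
    rw [← mul_apply, adjugate_mul, Matrix.smul_apply, one_apply_eq, smul_eq_mul, mul_one]
  simp_rw [expand]
  rw [sum_comm, sum_mul]
  exact sum_congr rfl fun j _ ↦ by rw [← mul_sum, diagonal]

theorem det_updateRow_mul_sub {ι R : Type*} [Fintype ι] [DecidableEq ι] [CommRing R]
    (M : Matrix ι ι R) (r : ι) (c : R) (d : ι → R) :
    (M.updateRow r (M r * fun j ↦ c - d j)).det =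
      c * M.det - (M.updateRow r (M r * d)).det := by
  have : (M r * fun j ↦ c - d j) = c • M r + (-1 : R) • (M r * d) := by
    ext j
    simp only [Pi.mul_apply, Pi.add_apply, Pi.smul_apply, smul_eq_mul]
    ring
  rw [this, det_updateRow_add, det_updateRow_smul, det_updateRow_smul, updateRow_eq_self]
  ring

theorem vandermonde_update {N : ℕ} {R : Type*} [CommRing R] (x : Fin N → R) (r : Fin N) (y : R) :
    vandermonde (Function.update x r y) =
      (vandermonde x).updateRow r fun j ↦ y ^ (j : ℕ) := by
  ext i j
  obtain rfl | hi := eq_or_ne i r <;> simp [vandermonde_apply, *]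

theorem det_vandermonde_update {N : ℕ} {K : Type*} [Field K] {x : Fin N → K}
    (hx : Function.Injective x) (r : Fin N) (y : K) :
    (vandermonde (Function.update x r y)).det =
      (∏ j ∈ univ.erase r, (y - x j) / (x r - x j)) * (vandermonde x).det := by
  have interpolate_pow (j : Fin N) :
      y ^ (j : ℕ) = ∑ i, (Lagrange.basis univ x i).eval y * x i ^ (j : ℕ) := by
    have h := congrArg (eval y) (Lagrange.eq_interpolate_of_eval_eq (s := univ) (v := x)
      (f := (X : K[X]) ^ (j : ℕ)) (fun i ↦ x i ^ (j : ℕ)) hx.injOn (by simp) (by simp))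
    simpa [Lagrange.interpolate_apply, eval_finsetSum, mul_comm] using h
  have row_eq : (fun j : Fin N ↦ y ^ (j : ℕ)) =
      ∑ i, (Lagrange.basis univ x i).eval y • vandermonde x i := by
    ext j
    simpa using interpolate_pow j
  rw [vandermonde_update, row_eq, det_updateRow_sum, smul_eq_mul, Lagrange.basis, eval_prod]
  congr 1
  exact prod_congr rfl fun j _ ↦ by simp [Lagrange.basisDivisor, div_eq_inv_mul]

theorem mul_eval_descPochhammer_sub_one {R : Type*} [CommRing R] (t : R) (j : ℕ) :
    t * (descPochhammer R j).eval (t - 1) = (descPochhammer R j).eval t * (t - j) := by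
  rw [← descPochhammer_succ_eval, descPochhammer_succ_left]
  simp

-- In the basis of falling factorials `pⱼ`, the operator `p(t) ↦ t * p(t - 1)` is multiplication of
-- `pⱼ` by `t - j`, so it acts on the rows by a scalar minus a fixed diagonal matrix.
theorem sum_mul_det_vandermonde_update_sub_one {N : ℕ} {R : Type*} [CommRing R] [IsDomain R]
    (x : Fin N → R) :
    ∑ r, x r * (vandermonde (Function.update x r (x r - 1))).det =
      (∑ r, x r - ∑ j : Fin N, (j : R)) * (vandermonde x).det := by
  let P (z : Fin N → R) : Matrix (Fin N) (Fin N) R :=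
    of fun i j ↦ (descPochhammer R j).eval (z i)
  have det_P (z : Fin N → R) : (vandermonde z).det = (P z).det :=
    det_eval_matrixOfPolynomials_eq_det_vandermonde z (fun j ↦ descPochhammer R j)
      (fun j ↦ descPochhammer_natDegree R j) (fun j ↦ monic_descPochhammer R j)
  have shift_row (r : Fin N) : x r * (P (Function.update x r (x r - 1))).det =
      x r * (P x).det - ((P x).updateRow r (P x r * fun j : Fin N ↦ (j : R))).det := by
    have update_P : P (Function.update x r (x r - 1)) =
        (P x).updateRow r fun j ↦ (descPochhammer R j).eval (x r - 1) := by
      ext i j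
      obtain rfl | hi := eq_or_ne i r <;> simp [P, *]
    rw [update_P, ← det_updateRow_smul, ← det_updateRow_mul_sub]
    congr 2
    ext j
    simpa [P] using mul_eval_descPochhammer_sub_one (x r) j
  simp_rw [det_P, shift_row]
  rw [sum_sub_distrib, sum_det_updateRow_mul, ← sum_mul, sub_mul]

end Determinants

section RowWeight

variable {N : ℕ}

/-- For strictly decreasing shifted row lengths `x r = λ r + N - 1 - r` of a partition `λ` of `n`,
`rowWeight x r / n` is the ratio `dim μ / dim λ`, where `μ` is `λ` with a box removed from
row `r`; see `removalProb_eq_rowWeight_div`. -/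
def rowWeight {K : Type*} [Field K] (x : Fin N → K) (r : Fin N) : K :=
  x r * ∏ j ∈ univ.erase r, (1 - (x r - x j)⁻¹)

open Matrix in
theorem mul_det_vandermonde_update_sub_one {K : Type*} [Field K] {x : Fin N → K}
    (hx : Function.Injective x) (r : Fin N) :
    x r * (vandermonde (Function.update x r (x r - 1))).det =
      rowWeight x r * (vandermonde x).det := by
  rw [det_vandermonde_update hx, rowWeight, mul_assoc]
  congr 2
  refine prod_congr rfl fun j hj ↦ ?_
  have : x r - x j ≠ 0 := sub_ne_zero.mpr (hx.ne (ne_of_mem_erase hj).symm)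
  field_simp
  ring

theorem sum_rowWeight {K : Type*} [Field K] {x : Fin N → K} (hx : Function.Injective x) :
    ∑ r, rowWeight x r = ∑ r, x r - ∑ j : Fin N, (j : K) := by
  refine mul_right_cancel₀ (Matrix.det_vandermonde_ne_zero_iff.mpr hx) ?_
  simp_rw [sum_mul, ← mul_det_vandermonde_update_sub_one hx]
  exact sum_mul_det_vandermonde_update_sub_one x

theorem rowWeight_le_rowWeight {x y : Fin N → ℝ} {r h i : Fin N} (hr : 0 ≤ x r)
    (hrh : r ≠ h) (hri : r ≠ i) (hhi : h ≠ i) (hxy : ∀ j, j ≠ h → j ≠ i → y j = x j)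
    (hx : ∀ j, 0 ≤ 1 - (x r - x j)⁻¹)
    (hpair : (1 - (x r - x h)⁻¹) * (1 - (x r - x i)⁻¹) ≤
      (1 - (x r - y h)⁻¹) * (1 - (x r - y i)⁻¹)) :
    rowWeight x r ≤ rowWeight y r := by
  have hsub : {h, i} ⊆ univ.erase r := by simp [insert_subset_iff, hrh.symm, hri.symm]
  have factor (z : Fin N → ℝ) : rowWeight z r =
      z r * (∏ j ∈ univ.erase r \ {h, i}, (1 - (z r - z j)⁻¹)) *
        ((1 - (z r - z h)⁻¹) * (1 - (z r - z i)⁻¹)) := by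
    rw [rowWeight, ← prod_sdiff hsub, prod_pair hhi, mul_assoc]
  have common : ∏ j ∈ univ.erase r \ {h, i}, (1 - (x r - y j)⁻¹) =
      ∏ j ∈ univ.erase r \ {h, i}, (1 - (x r - x j)⁻¹) := by
    refine prod_congr rfl fun j hj ↦ ?_
    simp only [mem_sdiff, mem_insert, mem_singleton, not_or] at hj
    rw [hxy j hj.2.1 hj.2.2]
  rw [factor x, factor y, hxy r hrh hri, common]
  gcongr
  exact mul_nonneg hr (prod_nonneg fun j _ ↦ hx j)

theorem one_sub_inv_mul_one_sub_inv {K : Type*} [Field K] {u v : K} (hu : u ≠ 0) (hv : v ≠ 0) :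
    (1 - u⁻¹) * (1 - v⁻¹) = 1 - (u + v - 1) / (u * v) := by
  field_simp
  ring

theorem one_sub_inv_mul_le_of_one_lt {u v : ℝ} (hu : 1 < u) (huv : u ≤ v + 1) :
    (1 - (u - 1)⁻¹) * (1 - (v + 1)⁻¹) ≤ (1 - u⁻¹) * (1 - v⁻¹) := by
  have hv : 0 < v := by linarith
  rw [one_sub_inv_mul_one_sub_inv (by linarith) (by linarith),
    one_sub_inv_mul_one_sub_inv (by linarith) hv.ne', sub_add_add_cancel]
  have : 0 < (u - 1) * (v + 1) := mul_pos (by linarith) (by linarith)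
  have hle : (u - 1) * (v + 1) ≤ u * v := by linarith
  exact sub_le_sub_left (div_le_div_of_nonneg_left (by linarith) this hle) 1

theorem le_one_sub_inv_mul_of_lt_neg_one {u v : ℝ} (hv : v < -1) (huv : u ≤ v + 1) :
    (1 - u⁻¹) * (1 - v⁻¹) ≤ (1 - (u - 1)⁻¹) * (1 - (v + 1)⁻¹) := by
  have hu : u < 0 := by linarith
  rw [one_sub_inv_mul_one_sub_inv hu.ne (by linarith),
    one_sub_inv_mul_one_sub_inv (by linarith) (by linarith), sub_add_add_cancel,
    sub_le_sub_iff_left]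
  have : 0 < (u - 1) * (v + 1) := mul_pos_of_neg_of_neg (by linarith) (by linarith)
  have hle : (u - 1) * (v + 1) ≤ u * v := by linarith
  rw [div_eq_mul_inv, div_eq_mul_inv]
  exact mul_le_mul_of_nonpos_left (inv_anti₀ this hle) (by linarith)

theorem one_sub_inv_intCast_nonneg (z : ℤ) : 0 ≤ 1 - (z : ℝ)⁻¹ := by
  obtain hz | hz := le_or_gt z 0
  · have : (z : ℝ)⁻¹ ≤ 0 := inv_nonpos.mpr (by exact_mod_cast hz)
    linarith
  · exact sub_nonneg.mpr (inv_le_one_of_one_le₀ (by exact_mod_cast hz))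

end RowWeight

section Partitions

variable {f g : ℕ → ℕ} {n N : ℕ}

/-- `f` is a partition of `n`, encoded as the sequence of its row lengths. -/
def IsPartitionOf (n : ℕ) (f : ℕ → ℕ) : Prop := isPartition f ∧ psize f = n

theorem psize_eq_sum_range (hf : ∀ a, N ≤ a → f a = 0) : psize f = ∑ a ∈ range N, f a := by
  refine finsum_eq_sum_of_support_subset f fun a ha ↦ ?_
  rw [coe_range, Set.mem_Iio]
  exact not_le.mp fun h ↦ ha (hf a h)

namespace IsPartitionOf

theorem of_antitone (hf : Antitone f) (hN : ∀ a, N ≤ a → f a = 0)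
    (hsum : ∑ a ∈ range N, f a = n) : IsPartitionOf n f :=
  ⟨⟨hf, N, hN⟩, (psize_eq_sum_range hN).trans hsum⟩

theorem zero : IsPartitionOf 0 fun _ ↦ 0 :=
  of_antitone (N := 0) antitone_const (fun _ _ ↦ rfl) (sum_range_zero _)

theorem antitone (hf : IsPartitionOf n f) : Antitone f := hf.1.1

theorem sum_range_le (hf : IsPartitionOf n f) (k : ℕ) : ∑ a ∈ range k, f a ≤ n := by
  obtain ⟨⟨_, M, hM⟩, rfl⟩ := hf
  rw [psize_eq_sum_range fun a ha ↦ hM a ((le_max_left M k).trans ha)]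
  exact sum_le_sum_of_subset (range_mono (le_max_right M k))

theorem eq_zero_of_le (hf : IsPartitionOf n f) {a : ℕ} (ha : n ≤ a) : f a = 0 := by
  by_contra hfa
  have h : #(range (a + 1)) • 1 ≤ ∑ b ∈ range (a + 1), f b :=
    card_nsmul_le_sum _ _ _ fun b hb ↦
      (Nat.one_le_iff_ne_zero.mpr hfa).trans (hf.antitone (mem_range_succ_iff.mp hb))
  simp only [card_range, smul_eq_mul, mul_one] at h
  exact absurd (h.trans (hf.sum_range_le _)) (by lia)

theorem sum_range_eq (hf : IsPartitionOf n f) (hN : n ≤ N) : ∑ a ∈ range N, f a = n := by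
  rw [← psize_eq_sum_range fun a ha ↦ hf.eq_zero_of_le (hN.trans ha), hf.2]

theorem le (hf : IsPartitionOf n f) (a : ℕ) : f a ≤ n :=
  (single_le_sum (fun _ _ ↦ Nat.zero_le _) (self_mem_range_succ a)).trans (hf.sum_range_le (a + 1))

theorem eq_zero (hf : IsPartitionOf 0 f) : f = fun _ ↦ 0 :=
  funext fun a ↦ hf.eq_zero_of_le a.zero_le

end IsPartitionOf

theorem finite_setOf_isPartitionOf (n : ℕ) : {f | IsPartitionOf n f}.Finite := by
  refine Set.Finite.of_injOn (f := fun f (i : Fin n) ↦ f i) (t := Set.Icc 0 fun _ ↦ n)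
    (fun f hf ↦ ⟨fun _ ↦ Nat.zero_le _, fun i : Fin n ↦ IsPartitionOf.le hf i⟩)
    (fun f hf g hg h ↦ funext fun a ↦ ?_) (Set.finite_Icc (0 : Fin n → ℕ) _)
  obtain ha | ha := le_or_gt n a
  · rw [hf.eq_zero_of_le ha, hg.eq_zero_of_le ha]
  · exact congrFun h ⟨a, ha⟩

/-- The finite set of partitions of `n`. -/
noncomputable def partitionsOf (n : ℕ) : Finset (ℕ → ℕ) := (finite_setOf_isPartitionOf n).toFinset

theorem mem_partitionsOf : f ∈ partitionsOf n ↔ IsPartitionOf n f := by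
  simp [partitionsOf]

theorem sum_range_add_single (f : ℕ → ℕ) (r k : ℕ) :
    ∑ a ∈ range k, (f + Pi.single r 1 : ℕ → ℕ) a = ∑ a ∈ range k, f a + if r < k then 1 else 0 := by
  simp [sum_add_distrib]

/-- `f` with one box removed from row `r`; this is a partition only if `f (r + 1) < f r`. -/
def removeBox (f : ℕ → ℕ) (r : ℕ) : ℕ → ℕ := Function.update f r (f r - 1)

theorem removeBox_add_single {r : ℕ} (hr : 0 < f r) : removeBox f r + Pi.single r 1 = f := by
  ext a
  obtain rfl | ha := eq_or_ne a r
  · simp [removeBox, Nat.sub_add_cancel hr]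
  · simp [removeBox, ha]

theorem sum_range_removeBox_add {r : ℕ} (hr : 0 < f r) (k : ℕ) :
    (∑ a ∈ range k, removeBox f r a) + (if r < k then 1 else 0) = ∑ a ∈ range k, f a := by
  rw [← sum_range_add_single, removeBox_add_single hr]

theorem addBox_removeBox {r : ℕ} (hr : 0 < f r) : addBox (removeBox f r) f :=
  ⟨r, by simp [removeBox, Nat.sub_add_cancel hr]⟩

theorem exists_eq_removeBox_of_addBox (hg : Antitone g) (h : addBox g f) :
    ∃ r, f (r + 1) < f r ∧ g = removeBox f r := by
  obtain ⟨r, rfl⟩ := h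
  refine ⟨r, ?_, by simp [removeBox]⟩
  have : g (r + 1) ≤ g r := hg r.le_succ
  simpa using this

theorem antitone_removeBox (hf : Antitone f) {r : ℕ} (hr : f (r + 1) < f r) :
    Antitone (removeBox f r) := by
  refine antitone_nat_of_succ_le fun a ↦ ?_
  have : f (a + 1) ≤ f a := hf a.le_succ
  simp only [removeBox, Function.update_apply]
  split_ifs <;> grind

/-- The rows of a partition `f` from which a box can be removed, i.e. `f (r + 1) < f r`. -/
noncomputable def removableRows (f : ℕ → ℕ) : Finset ℕ := {r ∈ range (psize f) | f (r + 1) < f r}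

theorem lt_of_mem_removableRows {r : ℕ} (hr : r ∈ removableRows f) : f (r + 1) < f r :=
  (mem_filter.mp hr).2

theorem pos_of_mem_removableRows {r : ℕ} (hr : r ∈ removableRows f) : 0 < f r :=
  Nat.zero_lt_of_lt (lt_of_mem_removableRows hr)

theorem injOn_removeBox : Set.InjOn (removeBox f) (removableRows f) := by
  intro r hr s _ h
  have hr' := congrFun (removeBox_add_single (pos_of_mem_removableRows hr)) r
  by_contra hrs
  rw [Pi.add_apply, h] at hr'
  simp [removeBox, hrs] at hr'

namespace IsPartitionOf

theorem mem_removableRows (hf : IsPartitionOf n f) {r : ℕ} :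
    r ∈ removableRows f ↔ f (r + 1) < f r := by
  rw [removableRows, mem_filter, mem_range, hf.2, and_iff_right_iff_imp]
  intro hr
  by_contra! hn
  simp [hf.eq_zero_of_le hn] at hr

theorem row_lt_of_mem_removableRows (hf : IsPartitionOf n f) {r : ℕ} (hr : r ∈ removableRows f) :
    r < n :=
  hf.2 ▸ mem_range.mp (mem_filter.mp hr).1

theorem removeBox_of_mem {r : ℕ} (hf : IsPartitionOf (n + 1) f) (hr : r ∈ removableRows f) :
    IsPartitionOf n (removeBox f r) := by
  refine of_antitone (N := n + 1) (antitone_removeBox hf.antitone (lt_of_mem_removableRows hr))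
    (fun a ha ↦ ?_) ?_
  · have : f a = 0 := hf.eq_zero_of_le ha
    simp only [removeBox, Function.update_apply]
    split_ifs <;> grind
  · have hrn : r < n + 1 := hf.row_lt_of_mem_removableRows hr
    have := sum_range_removeBox_add (pos_of_mem_removableRows hr) (n + 1)
    rw [hf.sum_range_eq le_rfl, if_pos hrn] at this
    exact Nat.add_right_cancel this

end IsPartitionOf

end Partitions

section DominanceOrder

variable {f g : ℕ → ℕ} {n h i : ℕ}

theorem add_single_eq_of_moveBox (hm : moveBox f g i h) (hhi : h < i) :
    g + Pi.single i 1 = f + Pi.single h 1 := by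
  obtain ⟨hi, hh, hother⟩ := hm
  ext a
  by_cases hai : a = i
  · subst hai
    simp [hi, hhi.ne']
  by_cases hah : a = h
  · subst hah
    simp [hh, hhi.ne]
  simp [hai, hah, hother a hai hah]

theorem sum_range_add_of_moveBox (hm : moveBox f g i h) (hhi : h < i) (k : ℕ) :
    (∑ a ∈ range k, g a) + (if i < k then 1 else 0) =
      (∑ a ∈ range k, f a) + if h < k then 1 else 0 := by
  rw [← sum_range_add_single, ← sum_range_add_single, add_single_eq_of_moveBox hm hhi]

theorem IsPartitionOf.lt_of_moveBox (hf : IsPartitionOf n f) (hm : moveBox f g i h) : i < n := by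
  by_contra! hni
  exact absurd (hm.1.symm.trans (hf.eq_zero_of_le hni)) (Nat.succ_ne_zero _)

theorem IsPartitionOf.of_moveBox (hf : IsPartitionOf n f) (hm : moveBox f g i h) (hhi : h < i)
    (hg : Antitone g) : IsPartitionOf n g := by
  have hin : i < n := hf.lt_of_moveBox hm
  refine of_antitone hg (N := n) (fun a ha ↦ ?_) ?_
  · rw [← hm.2.2 a (by lia) (by lia), hf.eq_zero_of_le ha]
  · have := sum_range_add_of_moveBox hm hhi n
    rw [if_pos hin, if_pos (hhi.trans hin), hf.sum_range_eq le_rfl] at this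
    exact Nat.add_right_cancel this

theorem sum_mul_lt_of_moveBox (hm : moveBox f g i h) (hhi : h < i) (hin : i < n) :
    ∑ a ∈ range n, a * g a < ∑ a ∈ range n, a * f a := by
  have := congrArg (fun w : ℕ → ℕ ↦ ∑ a ∈ range n, a * w a) (add_single_eq_of_moveBox hm hhi)
  simp only [Pi.add_apply, mul_add, sum_add_distrib, Pi.single_apply, mul_ite, mul_one, mul_zero,
    sum_ite_eq', mem_range, hin, hhi.trans hin, if_true] at this
  lia

theorem moveBox_removeBox_add_single (hi : 0 < f i) (hhi : h < i) :
    moveBox f (removeBox f i + Pi.single h 1) i h := by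
  refine ⟨?_, ?_, fun a hai hah ↦ ?_⟩
  · simp [removeBox, hhi.ne', Nat.sub_add_cancel hi]
  · simp [removeBox, hhi.ne]
  · simp [removeBox, hai, hah]

theorem antitone_add_single (hf : Antitone f) (hh : ∀ a, a + 1 = h → f h < f a) :
    Antitone (f + Pi.single h 1) := by
  refine antitone_nat_of_succ_le fun a ↦ ?_
  have : f (a + 1) ≤ f a := hf a.le_succ
  simp only [Pi.add_apply, Pi.single_apply]
  split_ifs <;> grind

theorem exists_lt_of_dominates_of_ne (hd : dominates g f) (hne : f ≠ g) :
    ∃ h, f h < g h ∧ ∀ a < h, f a = g a := by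
  classical
  have hex : ∃ a, f a ≠ g a := Function.ne_iff.mp hne
  have hmin : ∀ a < Nat.find hex, f a = g a := fun a ha ↦ not_not.mp (Nat.find_min hex ha)
  refine ⟨Nat.find hex, lt_of_le_of_ne ?_ (Nat.find_spec hex), hmin⟩
  have := hd (Nat.find hex + 1)
  rwa [sum_range_succ, sum_range_succ, sum_congr rfl fun a ha ↦ hmin a (mem_range.mp ha),
    Nat.add_le_add_iff_left] at this

theorem exists_sum_range_eq_of_dominates (hf : IsPartitionOf n f) (hg : IsPartitionOf n g)
    (hd : dominates g f) (hh : f h < g h) (hlt : ∀ a < h, f a = g a) :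
    ∃ i, h < i ∧ (∀ k, h < k → k ≤ i → ∑ a ∈ range k, f a < ∑ a ∈ range k, g a) ∧
      ∑ a ∈ range (i + 1), f a = ∑ a ∈ range (i + 1), g a := by
  classical
  have hstart : ∑ a ∈ range (h + 1), f a < ∑ a ∈ range (h + 1), g a := by
    rw [sum_range_succ, sum_range_succ, sum_congr rfl fun a ha ↦ hlt a (mem_range.mp ha)]
    exact Nat.add_lt_add_left hh _
  have hex : ∃ i, h < i ∧ ∑ a ∈ range (i + 1), f a = ∑ a ∈ range (i + 1), g a :=
    ⟨n + h + 1, by lia, by rw [hf.sum_range_eq (by lia), hg.sum_range_eq (by lia)]⟩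
  refine ⟨Nat.find hex, (Nat.find_spec hex).1, fun k hhk hki ↦ ?_, (Nat.find_spec hex).2⟩
  obtain ⟨j, rfl⟩ := Nat.exists_eq_add_one_of_ne_zero (Nat.ne_zero_of_lt hhk)
  obtain rfl | hhj := (Nat.lt_succ_iff.mp hhk).eq_or_lt
  · exact hstart
  · exact lt_of_le_of_ne (hd (j + 1)) fun heq ↦ Nat.find_min hex hki ⟨hhj, heq⟩

theorem exists_moveBox_of_dominates (hf : IsPartitionOf n f) (hg : IsPartitionOf n g)
    (hd : dominates g f) (hne : f ≠ g) :
    ∃ f' h i, h < i ∧ moveBox f f' i h ∧ IsPartitionOf n f' ∧ dominates g f' := by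
  obtain ⟨h, hh, hlt⟩ := exists_lt_of_dominates_of_ne hd hne
  obtain ⟨i, hhi, hstrict, hsum⟩ := exists_sum_range_eq_of_dominates hf hg hd hh hlt
  have hgfi : g i < f i := by
    have := hstrict i hhi le_rfl
    rw [sum_range_succ, sum_range_succ] at hsum
    lia
  have hremovable : f (i + 1) < f i := by
    have hsucc := hd (i + 2)
    rw [sum_range_succ, sum_range_succ _ (i + 1), hsum, Nat.add_le_add_iff_left] at hsucc
    exact (hsucc.trans (hg.antitone i.le_succ)).trans_lt hgfi
  have haddable (a : ℕ) (ha : a + 1 = h) : removeBox f i h < removeBox f i a := by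
    have hgh : g h ≤ g a := hg.antitone (by lia)
    simp only [removeBox, Function.update_of_ne hhi.ne, Function.update_of_ne (by lia : a ≠ i)]
    exact hh.trans_le (hgh.trans_eq (hlt a (by lia)).symm)
  have hm := moveBox_removeBox_add_single (Nat.zero_lt_of_lt hgfi) hhi
  refine ⟨_, h, i, hhi, hm, hf.of_moveBox hm hhi
    (antitone_add_single (antitone_removeBox hf.antitone hremovable) haddable), fun k ↦ ?_⟩
  have hsums := sum_range_add_of_moveBox hm hhi k
  have hle := hd k
  have hlt := hstrict k
  split_ifs at hsums <;> lia

/-- `g` is the partition obtained from the partition `f` of `n` by moving a box to a higher row. -/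
def IsBoxRaise (n : ℕ) (f g : ℕ → ℕ) : Prop :=
  IsPartitionOf n f ∧ IsPartitionOf n g ∧ ∃ h i, h < i ∧ moveBox f g i h

theorem reflTransGen_isBoxRaise_of_dominates (hf : IsPartitionOf n f) (hg : IsPartitionOf n g)
    (hd : dominates g f) : Relation.ReflTransGen (IsBoxRaise n) f g := by
  induction hw : ∑ a ∈ range n, a * f a using Nat.strong_induction_on generalizing f with
  | _ w ih =>
    obtain rfl | hne := eq_or_ne f g
    · exact .refl
    · obtain ⟨f', h, i, hhi, hm, hf', hd'⟩ := exists_moveBox_of_dominates hf hg hd hne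
      have hlt := sum_mul_lt_of_moveBox hm hhi (hf.lt_of_moveBox hm)
      exact .head ⟨hf, hf', h, i, hhi, hm⟩ (ih _ (hw ▸ hlt) hf' hd' rfl)

end DominanceOrder

section Dimension

variable {f g : ℕ → ℕ} {n : ℕ}

/-- The paths `0 = p 0 ↗ p 1 ↗ ⋯ ↗ p n = f` in Young's graph from the empty partition to `f`, where
`n` is the size of `f`, continued as constantly equal to `f`. They are counted by `dimY f`. -/
def youngPaths (f : ℕ → ℕ) : Set (ℕ → ℕ → ℕ) :=
  {p | p 0 = (fun _ ↦ 0) ∧ (∀ k, isPartition (p k)) ∧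
    (∀ k, k < psize f → addBox (p k) (p (k + 1))) ∧ ∀ k, psize f ≤ k → p k = f}

theorem dimY_eq_ncard_youngPaths (f : ℕ → ℕ) : dimY f = (youngPaths f).ncard := rfl

theorem youngPaths_zero : youngPaths (fun _ ↦ 0) = {fun _ _ ↦ 0} := by
  have hsize : psize (fun _ ↦ 0) = 0 := IsPartitionOf.zero.2
  ext p
  simp only [youngPaths, hsize, Set.mem_ofPred_eq, Set.mem_singleton_iff]
  constructor
  · rintro ⟨_, _, _, hp⟩
    exact funext fun k ↦ hp k k.zero_le
  · rintro rfl
    exact ⟨rfl, fun _ ↦ IsPartitionOf.zero.1, fun k hk ↦ absurd hk k.not_lt_zero, fun _ _ ↦ rfl⟩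

theorem dimY_zero : dimY (fun _ ↦ 0) = 1 := by
  rw [dimY_eq_ncard_youngPaths, youngPaths_zero, Set.ncard_singleton]

theorem dimY_eq_zero_of_not_isPartition (hf : ¬ isPartition f) : dimY f = 0 := by
  have : youngPaths f = ∅ :=
    Set.eq_empty_of_forall_notMem fun p hp ↦ hf (hp.2.2.2 _ le_rfl ▸ hp.2.1 (psize f))
  rw [dimY_eq_ncard_youngPaths, this, Set.ncard_empty]

/-- The path that follows `p` up to time `n` and stays at `f` afterwards. -/
def continuePath (n : ℕ) (f : ℕ → ℕ) (p : ℕ → ℕ → ℕ) : ℕ → ℕ → ℕ := fun k ↦ if k ≤ n then p k else f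

theorem continuePath_of_le {p : ℕ → ℕ → ℕ} {k : ℕ} (hk : k ≤ n) : continuePath n f p k = p k :=
  if_pos hk

theorem continuePath_of_lt {p : ℕ → ℕ → ℕ} {k : ℕ} (hk : n < k) : continuePath n f p k = f :=
  if_neg hk.not_ge

theorem isPartition_continuePath {p : ℕ → ℕ → ℕ} (hf : isPartition f) (hp : ∀ k, isPartition (p k))
    (k : ℕ) : isPartition (continuePath n f p k) := by
  unfold continuePath
  split_ifs
  exacts [hp k, hf]

theorem continuePath_mem_youngPaths {p : ℕ → ℕ → ℕ} (hg : IsPartitionOf n g)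
    (hf : IsPartitionOf (n + 1) f) (hgf : addBox g f) (hp : p ∈ youngPaths g) :
    continuePath n f p ∈ youngPaths f := by
  obtain ⟨hp0, hpart, hstep, hend⟩ := hp
  rw [hg.2] at hstep hend
  refine ⟨by rw [continuePath_of_le n.zero_le, hp0], isPartition_continuePath hf.1 hpart,
    fun k hk ↦ ?_, fun k hk ↦ continuePath_of_lt (hf.2.symm.trans_le hk)⟩
  obtain hk | rfl := (Nat.lt_succ_iff.mp (hf.2 ▸ hk)).lt_or_eq
  · rw [continuePath_of_le hk.le, continuePath_of_le hk]
    exact hstep k hk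
  · rwa [continuePath_of_le le_rfl, continuePath_of_lt k.lt_succ_self, hend k le_rfl]

theorem exists_continuePath_of_mem_youngPaths {p : ℕ → ℕ → ℕ} (hf : IsPartitionOf (n + 1) f)
    (hp : p ∈ youngPaths f) :
    ∃ r ∈ removableRows f, ∃ q ∈ youngPaths (removeBox f r), continuePath n f q = p := by
  obtain ⟨hp0, hpart, hstep, hend⟩ := hp
  rw [hf.2] at hstep hend
  have hlast : addBox (p n) f := hend (n + 1) le_rfl ▸ hstep n n.lt_succ_self
  obtain ⟨r, hr, hpn⟩ := exists_eq_removeBox_of_addBox (hpart n).1 hlast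
  rw [← hf.mem_removableRows] at hr
  have hg := hf.removeBox_of_mem hr
  refine ⟨r, hr, continuePath n (removeBox f r) p,
    ⟨by rw [continuePath_of_le n.zero_le, hp0], isPartition_continuePath hg.1 hpart,
      fun k hk ↦ ?_, fun k hk ↦ ?_⟩, funext fun k ↦ ?_⟩
  · have hk : k < n := hg.2 ▸ hk
    rw [continuePath_of_le hk.le, continuePath_of_le hk]
    exact hstep k (hk.trans n.lt_succ_self)
  · obtain hk | rfl := (hg.2 ▸ hk : n ≤ k).lt_or_eq
    · exact continuePath_of_lt hk
    · rw [continuePath_of_le le_rfl, hpn]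
  · obtain hk | hk := le_or_gt k n
    · rw [continuePath_of_le hk, continuePath_of_le hk]
    · rw [continuePath_of_lt hk, hend k hk]

theorem youngPaths_eq_biUnion (hf : IsPartitionOf (n + 1) f) :
    youngPaths f = ⋃ r ∈ (removableRows f : Set ℕ),
      continuePath n f '' youngPaths (removeBox f r) := by
  refine Set.Subset.antisymm (fun p hp ↦ ?_) (Set.iUnion₂_subset fun r hr ↦ ?_)
  · simpa using exists_continuePath_of_mem_youngPaths hf hp
  · rintro _ ⟨q, hq, rfl⟩
    exact continuePath_mem_youngPaths (hf.removeBox_of_mem hr) hf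
      (addBox_removeBox (pos_of_mem_removableRows hr)) hq

theorem finite_youngPaths (hf : IsPartitionOf n f) : (youngPaths f).Finite := by
  induction n generalizing f with
  | zero => rw [hf.eq_zero, youngPaths_zero]; exact Set.finite_singleton _
  | succ n ih =>
    rw [youngPaths_eq_biUnion hf]
    exact (removableRows f).finite_toSet.biUnion fun r hr ↦ (ih (hf.removeBox_of_mem hr)).image _

theorem injOn_continuePath (hg : IsPartitionOf n g) :
    Set.InjOn (continuePath n f) (youngPaths g) := by
  intro p hp q hq h
  ext1 k
  obtain hk | hk := le_or_gt k n
  · have := congrFun h k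
    rwa [continuePath_of_le hk, continuePath_of_le hk] at this
  · rw [hp.2.2.2 k (hg.2 ▸ hk.le), hq.2.2.2 k (hg.2 ▸ hk.le)]

theorem disjoint_image_continuePath {g' : ℕ → ℕ} (hg : IsPartitionOf n g)
    (hg' : IsPartitionOf n g') (hne : g ≠ g') :
    Disjoint (continuePath n f '' youngPaths g) (continuePath n f '' youngPaths g') := by
  rw [Set.disjoint_left]
  rintro _ ⟨p, hp, rfl⟩ ⟨q, hq, h⟩
  have := congrFun h n
  rw [continuePath_of_le le_rfl, continuePath_of_le le_rfl, hp.2.2.2 n hg.2.le,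
    hq.2.2.2 n hg'.2.le] at this
  exact hne this.symm

theorem dimY_eq_sum_removeBox (hf : IsPartitionOf (n + 1) f) :
    dimY f = ∑ r ∈ removableRows f, dimY (removeBox f r) := by
  rw [dimY_eq_ncard_youngPaths, youngPaths_eq_biUnion hf,
    (removableRows f).finite_toSet.ncard_biUnion
      (fun r hr ↦ (finite_youngPaths (hf.removeBox_of_mem hr)).image _)
      fun r hr s hs hrs ↦ disjoint_image_continuePath (hf.removeBox_of_mem hr)
        (hf.removeBox_of_mem hs) (injOn_removeBox.ne hr hs hrs),
    finsum_mem_coe_finset]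
  exact sum_congr rfl fun r hr ↦ (injOn_continuePath (hf.removeBox_of_mem hr)).ncard_image

theorem eq_dimY_mul_of_branching {R : Type*} [Semiring R] {N : ℕ} {F : (ℕ → ℕ) → R}
    (hF : ∀ m < N, ∀ f, IsPartitionOf (m + 1) f →
      F f = ∑ r ∈ removableRows f, F (removeBox f r))
    (hn : n ≤ N) (hf : IsPartitionOf n f) : F f = dimY f * F fun _ ↦ 0 := by
  induction n generalizing f with
  | zero => rw [hf.eq_zero, dimY_zero, Nat.cast_one, one_mul]
  | succ n ih =>
    rw [hF n hn f hf, dimY_eq_sum_removeBox hf, Nat.cast_sum, sum_mul]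
    exact sum_congr rfl fun r hr ↦ ih (Nat.le_of_succ_le hn) (hf.removeBox_of_mem hr)

end Dimension

section FrobeniusFormula

open Matrix Nat

variable {f : ℕ → ℕ} {n N : ℕ}

/-- The shifted row length `f i + N - 1 - i` of a partition `f`; row indices start at `0`. -/
def shiftedRow (N : ℕ) (f : ℕ → ℕ) (i : Fin N) : ℝ := f i + (i.rev : ℕ)

theorem shiftedRow_eq_natCast (f : ℕ → ℕ) (i : Fin N) :
    shiftedRow N f i = ((f i + i.rev : ℕ) : ℝ) :=
  (Nat.cast_add _ _).symm

theorem shiftedRow_nonneg (f : ℕ → ℕ) (i : Fin N) : 0 ≤ shiftedRow N f i := by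
  rw [shiftedRow_eq_natCast]
  exact Nat.cast_nonneg _

theorem shiftedRow_add_one_le (hf : Antitone f) {i j : Fin N} (hij : i < j) :
    shiftedRow N f j + 1 ≤ shiftedRow N f i := by
  rw [shiftedRow_eq_natCast, shiftedRow_eq_natCast, ← Nat.cast_add_one, Nat.cast_le, add_assoc]
  exact Nat.add_le_add (hf hij.le) (Fin.rev_lt_rev.mpr hij)

theorem injective_shiftedRow (hf : Antitone f) : Function.Injective (shiftedRow N f) :=
  StrictAnti.injective fun _ _ hij ↦ (lt_add_one _).trans_le (shiftedRow_add_one_le hf hij)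

theorem sum_shiftedRow_sub (hf : IsPartitionOf n f) (hN : n ≤ N) :
    ∑ i, shiftedRow N f i - ∑ i : Fin N, (i : ℝ) = n := by
  have hrev : ∑ i : Fin N, ((i.rev : ℕ) : ℝ) = ∑ i : Fin N, ((i : ℕ) : ℝ) :=
    Equiv.sum_comp Fin.revPerm fun i : Fin N ↦ ((i : ℕ) : ℝ)
  simp only [shiftedRow, sum_add_distrib, hrev, add_sub_cancel_right]
  rw [Fin.sum_univ_eq_sum_range (fun a ↦ (f a : ℝ)), ← Nat.cast_sum, hf.sum_range_eq hN]

theorem shiftedRow_removeBox {r : Fin N} (hr : 0 < f r) :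
    shiftedRow N (removeBox f r) =
      Function.update (shiftedRow N f) r (shiftedRow N f r - 1) := by
  ext i
  obtain rfl | hi := eq_or_ne i r
  · simp only [shiftedRow, removeBox, Function.update_self, Nat.cast_pred hr]
    ring
  · simp [shiftedRow, removeBox, hi, Fin.val_ne_of_ne hi]

theorem shiftedRow_mul_prod_factorial_removeBox {r : Fin N} (hr : 0 < f r) :
    shiftedRow N f r * ∏ i : Fin N, ((removeBox f r i + i.rev)! : ℝ) =
      ∏ i : Fin N, ((f i + i.rev)! : ℝ) := by
  rw [← mul_prod_erase univ _ (mem_univ r),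
    ← mul_prod_erase univ (fun i : Fin N ↦ ((f i + i.rev)! : ℝ)) (mem_univ r), ← mul_assoc]
  congr 1
  · rw [shiftedRow_eq_natCast, ← Nat.mul_factorial_pred (by lia : f r + r.rev ≠ 0)]
    simp only [removeBox, Function.update_self, ← Nat.sub_add_comm (succ_le_of_lt hr)]
    exact (Nat.cast_mul _ _).symm
  · refine prod_congr rfl fun i hi ↦ ?_
    rw [removeBox, Function.update_of_ne (Fin.val_ne_of_ne (ne_of_mem_erase hi))]

theorem rowWeight_shiftedRow_eq_zero (hf : IsPartitionOf n f) (hN : n ≤ N) {r : Fin N}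
    (hr : (r : ℕ) ∉ removableRows f) : rowWeight (shiftedRow N f) r = 0 := by
  have heq : f (r + 1) = f r :=
    (hf.antitone (r : ℕ).le_succ).antisymm (not_lt.mp (hf.mem_removableRows.not.mp hr))
  obtain hlt | hlast := (succ_le_of_lt r.is_lt).lt_or_eq
  · have hne : r ≠ ⟨r + 1, hlt⟩ := Fin.ne_of_val_ne (Nat.ne_add_one _)
    refine mul_eq_zero_of_right _ (prod_eq_zero (mem_erase.mpr ⟨hne.symm, mem_univ _⟩) ?_)
    have : shiftedRow N f r - shiftedRow N f ⟨r + 1, hlt⟩ = 1 := by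
      rw [sub_eq_iff_eq_add, shiftedRow_eq_natCast, shiftedRow_eq_natCast, ← Nat.cast_one_add]
      simp only [heq, Fin.val_rev]
      congr 1
      lia
    rw [this, inv_one, sub_self]
  · have hzero : f r = 0 := heq ▸ hf.eq_zero_of_le (hN.trans_eq hlast.symm)
    simp [rowWeight, shiftedRow, hzero, Fin.val_rev, ← hlast]

theorem sum_removableRows (hf : IsPartitionOf n f) (hN : n ≤ N) (w : ℕ → ℝ) :
    ∑ r ∈ removableRows f, w r =
      ∑ r : Fin N, if (r : ℕ) ∈ removableRows f then w r else 0 := by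
  have hsub : removableRows f ⊆ range N :=
    (filter_subset _ _).trans (range_mono (hf.2.trans_le hN))
  rw [Fin.sum_univ_eq_sum_range (fun r ↦ if r ∈ removableRows f then w r else 0), sum_ite_mem,
    inter_eq_right.mpr hsub]

/-- The right-hand side `n! * ∏_{i < j} (xᵢ - xⱼ) / ∏ᵢ xᵢ!` of Frobenius' dimension formula, up to
sign, for the shifted row lengths `xᵢ` of a partition of `n`. -/
noncomputable def frobeniusDim (N : ℕ) (f : ℕ → ℕ) : ℝ :=
  (psize f)! * (vandermonde (shiftedRow N f)).det / ∏ i : Fin N, ((f i + i.rev)! : ℝ)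

theorem frobeniusDim_ne_zero (hf : Antitone f) : frobeniusDim N f ≠ 0 :=
  div_ne_zero
    (mul_ne_zero (Nat.cast_ne_zero.mpr (factorial_ne_zero _))
      (det_vandermonde_ne_zero_iff.mpr (injective_shiftedRow hf)))
    (prod_ne_zero_iff.mpr fun _ _ ↦ Nat.cast_ne_zero.mpr (factorial_ne_zero _))

theorem frobeniusDim_removeBox (hf : IsPartitionOf (n + 1) f) {r : Fin N}
    (hr : (r : ℕ) ∈ removableRows f) :
    frobeniusDim N (removeBox f r) =
      rowWeight (shiftedRow N f) r / (n + 1) * frobeniusDim N f := by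
  have hpos : 0 < f r := pos_of_mem_removableRows hr
  have hprod := shiftedRow_mul_prod_factorial_removeBox (N := N) hpos
  have hdet := mul_det_vandermonde_update_sub_one (injective_shiftedRow (N := N) hf.antitone) r
  have hx : shiftedRow N f r ≠ 0 := by
    rw [shiftedRow_eq_natCast, Nat.cast_ne_zero]
    lia
  have hfac : ∏ i : Fin N, ((f i + i.rev)! : ℝ) ≠ 0 :=
    prod_ne_zero_iff.mpr fun _ _ ↦ Nat.cast_ne_zero.mpr (factorial_ne_zero _)
  rw [frobeniusDim, frobeniusDim, shiftedRow_removeBox hpos, hf.2, (hf.removeBox_of_mem hr).2,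
    ← mul_div_mul_left _ _ hx, hprod, mul_left_comm, hdet, factorial_succ, Nat.cast_mul,
    Nat.cast_add_one]
  field_simp

theorem frobeniusDim_eq_sum_removeBox (hf : IsPartitionOf (n + 1) f) (hN : n + 1 ≤ N) :
    frobeniusDim N f = ∑ r ∈ removableRows f, frobeniusDim N (removeBox f r) := by
  have hweight (r : Fin N) :
      (if (r : ℕ) ∈ removableRows f then frobeniusDim N (removeBox f r) else 0) =
        rowWeight (shiftedRow N f) r / (n + 1) * frobeniusDim N f := by
    split_ifs with hr
    · exact frobeniusDim_removeBox hf hr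
    · rw [rowWeight_shiftedRow_eq_zero hf hN hr, zero_div, zero_mul]
  rw [sum_removableRows hf hN, sum_congr rfl fun r _ ↦ hweight r, ← sum_mul, ← sum_div,
    sum_rowWeight (injective_shiftedRow hf.antitone), sum_shiftedRow_sub hf hN, Nat.cast_add_one,
    div_self (Nat.cast_add_one_ne_zero n), one_mul]

theorem frobeniusDim_eq_dimY_mul (hf : IsPartitionOf n f) (hN : n ≤ N) :
    frobeniusDim N f = dimY f * frobeniusDim N fun _ ↦ 0 :=
  eq_dimY_mul_of_branching (fun _ hm _ hg ↦ frobeniusDim_eq_sum_removeBox hg hm) hN hf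

theorem dimY_ne_zero (hf : IsPartitionOf n f) : dimY f ≠ 0 := by
  intro h
  apply frobeniusDim_ne_zero (N := n) hf.antitone
  rw [frobeniusDim_eq_dimY_mul hf le_rfl, h, Nat.cast_zero, zero_mul]

end FrobeniusFormula

section RemovalProbability

variable {f g : ℕ → ℕ} {n N : ℕ}

/-- The probability that the last step of a uniformly random path from the empty partition to `f` in
Young's graph adds a box to row `r`. -/
noncomputable def removalProb (f : ℕ → ℕ) (r : ℕ) : ℝ :=
  if r ∈ removableRows f then (dimY (removeBox f r) : ℝ) / dimY f else 0

theorem removalProb_of_mem {r : ℕ} (hr : r ∈ removableRows f) :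
    removalProb f r = (dimY (removeBox f r) : ℝ) / dimY f :=
  if_pos hr

theorem removalProb_of_notMem {r : ℕ} (hr : r ∉ removableRows f) : removalProb f r = 0 :=
  if_neg hr

theorem removalProb_nonneg (f : ℕ → ℕ) (r : ℕ) : 0 ≤ removalProb f r := by
  unfold removalProb
  positivity

theorem sum_range_removalProb (hf : IsPartitionOf (n + 1) f) :
    ∑ r ∈ range (n + 1), removalProb f r = 1 := by
  have hsub : removableRows f ⊆ range (n + 1) := hf.2 ▸ filter_subset _ _
  rw [← sum_subset hsub fun r _ hr ↦ removalProb_of_notMem hr,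
    sum_congr rfl fun r hr ↦ removalProb_of_mem hr, ← sum_div, ← Nat.cast_sum,
    ← dimY_eq_sum_removeBox hf, div_self (Nat.cast_ne_zero.mpr (dimY_ne_zero hf))]

theorem removalProb_eq_rowWeight_div (hf : IsPartitionOf (n + 1) f) (hN : n + 1 ≤ N) (r : Fin N) :
    removalProb f r = rowWeight (shiftedRow N f) r / (n + 1) := by
  by_cases hr : (r : ℕ) ∈ removableRows f
  · have hzero : frobeniusDim N (fun _ ↦ 0) ≠ 0 := frobeniusDim_ne_zero antitone_const
    rw [removalProb_of_mem hr, div_eq_iff (Nat.cast_ne_zero.mpr (dimY_ne_zero hf)),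
      ← mul_left_inj' hzero, mul_assoc, ← frobeniusDim_eq_dimY_mul hf hN,
      ← frobeniusDim_eq_dimY_mul (hf.removeBox_of_mem hr) (Nat.le_of_succ_le hN),
      frobeniusDim_removeBox hf hr]
  · rw [removalProb_of_notMem hr, rowWeight_shiftedRow_eq_zero hf hN hr, zero_div]

end RemovalProbability

section MoveBox

variable {f g : ℕ → ℕ} {n N : ℕ}

theorem shiftedRow_eq_of_moveBox {h i : Fin N} (hm : moveBox f g i h) :
    shiftedRow N g h = shiftedRow N f h + 1 ∧ shiftedRow N f i = shiftedRow N g i + 1 ∧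
      ∀ j, j ≠ h → j ≠ i → shiftedRow N f j = shiftedRow N g j := by
  obtain ⟨hi, hh, hother⟩ := hm
  refine ⟨?_, ?_, fun j hjh hji ↦ ?_⟩
  · rw [shiftedRow, shiftedRow, hh, Nat.cast_add_one, add_right_comm]
  · rw [shiftedRow, shiftedRow, hi, Nat.cast_add_one, add_right_comm]
  · rw [shiftedRow, shiftedRow, hother j (Fin.val_ne_of_ne hji) (Fin.val_ne_of_ne hjh)]

theorem one_sub_inv_shiftedRow_sub_nonneg (f : ℕ → ℕ) (r j : Fin N) :
    0 ≤ 1 - (shiftedRow N f r - shiftedRow N f j)⁻¹ := by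
  have := one_sub_inv_intCast_nonneg ((f r + r.rev : ℕ) - (f j + j.rev : ℕ))
  rwa [Int.cast_sub, Int.cast_natCast, Int.cast_natCast, ← shiftedRow_eq_natCast,
    ← shiftedRow_eq_natCast] at this

theorem rowWeight_le_of_moveBox_of_lt (hf : Antitone f) (hg : Antitone g) {r h i : Fin N}
    (hm : moveBox f g i h) (hrh : r < h) (hhi : h < i) :
    rowWeight (shiftedRow N g) r ≤ rowWeight (shiftedRow N f) r := by
  obtain ⟨hh, hi, hother⟩ := shiftedRow_eq_of_moveBox hm
  have hri : r < i := hrh.trans hhi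
  have hr : shiftedRow N f r = shiftedRow N g r := hother r hrh.ne hri.ne
  have hu : shiftedRow N g r - shiftedRow N g h = shiftedRow N f r - shiftedRow N f h - 1 := by
    linarith
  have hv : shiftedRow N g r - shiftedRow N g i = shiftedRow N f r - shiftedRow N f i + 1 := by
    linarith
  have hgap : shiftedRow N g h + 1 ≤ shiftedRow N g r := shiftedRow_add_one_le hg hrh
  have hlt : shiftedRow N f i + 1 ≤ shiftedRow N f h := shiftedRow_add_one_le hf hhi
  refine rowWeight_le_rowWeight (shiftedRow_nonneg g r) hrh.ne hri.ne hhi.ne hother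
    (one_sub_inv_shiftedRow_sub_nonneg g r) ?_
  rw [hu, hv, ← hr]
  exact one_sub_inv_mul_le_of_one_lt (by linarith) (by linarith)

theorem rowWeight_le_of_moveBox_of_gt (hf : Antitone f) (hg : Antitone g) {r h i : Fin N}
    (hm : moveBox f g i h) (hhi : h < i) (hir : i < r) :
    rowWeight (shiftedRow N f) r ≤ rowWeight (shiftedRow N g) r := by
  obtain ⟨hh, hi, hother⟩ := shiftedRow_eq_of_moveBox hm
  have hhr : h < r := hhi.trans hir
  have hr : shiftedRow N f r = shiftedRow N g r := hother r hhr.ne' hir.ne'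
  have hu : shiftedRow N f r - shiftedRow N g h = shiftedRow N f r - shiftedRow N f h - 1 := by
    linarith
  have hv : shiftedRow N f r - shiftedRow N g i = shiftedRow N f r - shiftedRow N f i + 1 := by
    linarith
  have hgap : shiftedRow N g r + 1 ≤ shiftedRow N g i := shiftedRow_add_one_le hg hir
  have hlt : shiftedRow N f i + 1 ≤ shiftedRow N f h := shiftedRow_add_one_le hf hhi
  refine rowWeight_le_rowWeight (shiftedRow_nonneg f r) hhr.ne' hir.ne' hhi.ne
    (fun j hjh hji ↦ (hother j hjh hji).symm) (one_sub_inv_shiftedRow_sub_nonneg f r) ?_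
  rw [hu, hv]
  exact le_one_sub_inv_mul_of_lt_neg_one (by linarith) (by linarith)

theorem removalProb_le_of_moveBox_of_lt (hf : IsPartitionOf (n + 1) f)
    (hg : IsPartitionOf (n + 1) g) {r h i : ℕ} (hm : moveBox f g i h) (hrh : r < h) (hhi : h < i) :
    removalProb g r ≤ removalProb f r := by
  obtain ⟨N, hN, hiN⟩ : ∃ N, n + 1 ≤ N ∧ i < N := ⟨n + 1 + (i + 1), by lia, by lia⟩
  lift r to Fin N using (hrh.trans hhi).trans hiN
  lift h to Fin N using hhi.trans hiN
  lift i to Fin N using hiN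
  rw [removalProb_eq_rowWeight_div hf hN, removalProb_eq_rowWeight_div hg hN]
  gcongr
  exact rowWeight_le_of_moveBox_of_lt hf.antitone hg.antitone hm hrh hhi

theorem removalProb_le_of_moveBox_of_gt (hf : IsPartitionOf (n + 1) f)
    (hg : IsPartitionOf (n + 1) g) {r h i : ℕ} (hm : moveBox f g i h) (hhi : h < i) (hir : i < r) :
    removalProb f r ≤ removalProb g r := by
  obtain ⟨N, hN, hrN⟩ : ∃ N, n + 1 ≤ N ∧ r < N := ⟨n + 1 + (r + 1), by lia, by lia⟩
  lift h to Fin N using (hhi.trans hir).trans hrN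
  lift i to Fin N using hir.trans hrN
  lift r to Fin N using hrN
  rw [removalProb_eq_rowWeight_div hf hN, removalProb_eq_rowWeight_div hg hN]
  gcongr
  exact rowWeight_le_of_moveBox_of_gt hf.antitone hg.antitone hm hhi hir

theorem sum_Ico_removalProb_le_of_moveBox (hf : IsPartitionOf (n + 1) f)
    (hg : IsPartitionOf (n + 1) g) {h i t : ℕ} (hm : moveBox f g i h) (hhi : h < i)
    (ht : t ≤ h ∨ i < t) :
    ∑ r ∈ Ico t (n + 1), removalProb f r ≤ ∑ r ∈ Ico t (n + 1), removalProb g r := by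
  obtain hth | hit := ht
  · have hi : i < n + 1 := hf.lt_of_moveBox hm
    have head : ∑ r ∈ range t, removalProb g r ≤ ∑ r ∈ range t, removalProb f r :=
      sum_le_sum fun r hr ↦
        removalProb_le_of_moveBox_of_lt hf hg hm ((mem_range.mp hr).trans_le hth) hhi
    have htn : t ≤ n + 1 := by lia
    have hfsum := sum_range_add_sum_Ico (removalProb f) htn
    have hgsum := sum_range_add_sum_Ico (removalProb g) htn
    rw [sum_range_removalProb hf] at hfsum
    rw [sum_range_removalProb hg] at hgsum
    linarith
  · exact sum_le_sum fun r hr ↦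
      removalProb_le_of_moveBox_of_gt hf hg hm hhi (hit.trans_le (mem_Ico.mp hr).1)

end MoveBox

section RemovalMeasure

variable {f g : ℕ → ℕ} {n h i s r : ℕ} {U : Set (ℕ → ℕ)}

/-- `U` is closed under passing to partitions of `m` that are larger in the dominance order. These
are the sets tested in `stochDom m`. -/
def IsDominanceUpper (m : ℕ) (U : Set (ℕ → ℕ)) : Prop :=
  ∀ a ∈ U, ∀ b, isPartition b → psize b = m → dominates b a → b ∈ U

open Classical in
/-- The mass that the projection of the unit mass at the partition `f` gives to `U`. -/
noncomputable def removalMeasure (f : ℕ → ℕ) (U : Set (ℕ → ℕ)) : ℝ :=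
  ∑ r ∈ removableRows f with removeBox f r ∈ U, removalProb f r

theorem removalMeasure_nonneg (f : ℕ → ℕ) (U : Set (ℕ → ℕ)) : 0 ≤ removalMeasure f U :=
  sum_nonneg fun r _ ↦ removalProb_nonneg f r

theorem removalMeasure_le_sum_Ico (hf : IsPartitionOf n f)
    (hs : ∀ r ∈ removableRows f, removeBox f r ∈ U → s ≤ r) :
    removalMeasure f U ≤ ∑ r ∈ Ico s n, removalProb f r := by
  classical
  refine sum_le_sum_of_subset_of_nonneg (fun r hr ↦ ?_) fun r _ _ ↦ removalProb_nonneg f r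
  obtain ⟨hr, hrU⟩ := mem_filter.mp hr
  exact mem_Ico.mpr ⟨hs r hr hrU, hf.row_lt_of_mem_removableRows hr⟩

theorem sum_Ico_le_removalMeasure
    (hs : ∀ r ∈ removableRows f, s ≤ r → removeBox f r ∈ U) :
    ∑ r ∈ Ico s n, removalProb f r ≤ removalMeasure f U := by
  classical
  rw [← sum_filter_ne_zero]
  refine sum_le_sum_of_subset_of_nonneg (fun r hr ↦ ?_) fun r _ _ ↦ removalProb_nonneg f r
  obtain ⟨hsr, hr⟩ := mem_filter.mp hr
  have hrow : r ∈ removableRows f := not_imp_comm.mp removalProb_of_notMem hr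
  exact mem_filter.mpr ⟨hrow, hs r hrow (mem_Ico.mp hsr).1⟩

theorem dominates_removeBox_of_moveBox (hm : moveBox f g i h) (hhi : h < i)
    (hs : s ∈ removableRows f) (hr : r ∈ removableRows g) (hsr : s ≤ r ∨ s ≤ i ∧ h ≤ r) :
    dominates (removeBox g r) (removeBox f s) := by
  intro k
  have hfk := sum_range_removeBox_add (pos_of_mem_removableRows hs) k
  have hgk := sum_range_removeBox_add (pos_of_mem_removableRows hr) k
  have hfg := sum_range_add_of_moveBox hm hhi k
  split_ifs at hfk hgk hfg <;> lia

theorem removalMeasure_le_of_moveBox (hU : IsDominanceUpper n U) (hf : IsPartitionOf (n + 1) f)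
    (hg : IsPartitionOf (n + 1) g) (hm : moveBox f g i h) (hhi : h < i) :
    removalMeasure f U ≤ removalMeasure g U := by
  classical
  obtain hempty | hne := {r ∈ removableRows f | removeBox f r ∈ U}.eq_empty_or_nonempty
  · rw [removalMeasure, hempty, sum_empty]
    exact removalMeasure_nonneg g U
  obtain ⟨s, hs, hmin⟩ := exists_min_image _ id hne
  obtain ⟨hs, hsU⟩ := mem_filter.mp hs
  obtain ⟨t, hts, ht, htr⟩ :
      ∃ t ≤ s, (t ≤ h ∨ i < t) ∧ ∀ r, t ≤ r → s ≤ r ∨ s ≤ i ∧ h ≤ r := by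
    obtain hsi | his := le_or_gt s i
    · exact ⟨min s h, min_le_left s h, .inl (min_le_right s h), by lia⟩
    · exact ⟨s, le_rfl, .inr his, fun r ↦ .inl⟩
  calc removalMeasure f U ≤ ∑ r ∈ Ico t (n + 1), removalProb f r :=
        removalMeasure_le_sum_Ico hf fun r hr hrU ↦ hts.trans (hmin r (mem_filter.mpr ⟨hr, hrU⟩))
    _ ≤ ∑ r ∈ Ico t (n + 1), removalProb g r := sum_Ico_removalProb_le_of_moveBox hf hg hm hhi ht
    _ ≤ removalMeasure g U := sum_Ico_le_removalMeasure fun r hr htr' ↦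
        hU _ hsU _ (hg.removeBox_of_mem hr).1 (hg.removeBox_of_mem hr).2
          (dominates_removeBox_of_moveBox hm hhi hs hr (htr r htr'))

theorem removalMeasure_le_of_dominates (hU : IsDominanceUpper n U) (hf : IsPartitionOf (n + 1) f)
    (hg : IsPartitionOf (n + 1) g) (hd : dominates g f) :
    removalMeasure f U ≤ removalMeasure g U := by
  have hpath := reflTransGen_isBoxRaise_of_dominates hf hg hd
  clear hg hd
  induction hpath with
  | refl => rfl
  | tail _ hraise ih =>
    obtain ⟨hg, hg', h, i, hhi, hm⟩ := hraise
    exact ih.trans (removalMeasure_le_of_moveBox hU hg hg' hm hhi)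

end RemovalMeasure

section Projection

variable {f : ℕ → ℕ} {n : ℕ} {rho rho' : (ℕ → ℕ) → ℝ}

theorem finsum_mem_eq_sum_partitionsOf (hrho : ∀ f, rho f ≠ 0 → IsPartitionOf n f)
    (U : Set (ℕ → ℕ)) [DecidablePred (· ∈ U)] :
    ∑ᶠ f ∈ U, rho f = ∑ f ∈ partitionsOf n with f ∈ U, rho f := by
  refine finsum_mem_eq_sum_of_inter_support_eq rho ?_
  ext f
  simp only [Set.mem_inter_iff, Function.mem_support, coe_filter, Set.mem_ofPred_eq,
    mem_partitionsOf]
  grind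

theorem isPartitionOf_of_projStep_ne_zero (hrho : ∀ f, rho f ≠ 0 → IsPartitionOf (n + 1) f)
    (hf : projStep rho f ≠ 0) : IsPartitionOf n f := by
  obtain ⟨l, hadd, hne⟩ := exists_ne_zero_of_finsum_mem_ne_zero hf
  have hl : IsPartitionOf (n + 1) l := hrho l (right_ne_zero_of_mul hne)
  have hpart : isPartition f := by
    by_contra hnot
    simp [dimY_eq_zero_of_not_isPartition hnot] at hne
  obtain ⟨r, hr, rfl⟩ := exists_eq_removeBox_of_addBox hpart.1 hadd
  exact hl.removeBox_of_mem (hl.mem_removableRows.mpr hr)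

open Classical in
theorem sum_dimY_div_dimY_eq_removalMeasure (hf : IsPartitionOf (n + 1) f) (U : Set (ℕ → ℕ)) :
    ∑ g ∈ partitionsOf n with g ∈ U ∧ addBox g f, (dimY g : ℝ) / dimY f = removalMeasure f U := by
  symm
  refine sum_nbij (removeBox f) (fun r hr ↦ ?_)
    (injOn_removeBox.mono (coe_subset.mpr (filter_subset _ _))) (fun g hg ↦ ?_)
    fun r hr ↦ removalProb_of_mem (mem_filter.mp hr).1
  · obtain ⟨hr, hrU⟩ := mem_filter.mp hr
    exact mem_filter.mpr ⟨mem_partitionsOf.mpr (hf.removeBox_of_mem hr), hrU,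
      addBox_removeBox (pos_of_mem_removableRows hr)⟩
  · obtain ⟨hg, hgU, hadd⟩ := mem_filter.mp hg
    obtain ⟨r, hr, rfl⟩ := exists_eq_removeBox_of_addBox (mem_partitionsOf.mp hg).antitone hadd
    exact ⟨r, mem_filter.mpr ⟨hf.mem_removableRows.mpr hr, hgU⟩, rfl⟩

theorem finsum_mem_projStep (hrho : ∀ f, rho f ≠ 0 → IsPartitionOf (n + 1) f)
    (U : Set (ℕ → ℕ)) :
    ∑ᶠ f ∈ U, projStep rho f = ∑ l ∈ partitionsOf (n + 1), removalMeasure l U * rho l := by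
  classical
  have hproj (f : ℕ → ℕ) : projStep rho f =
      ∑ l ∈ partitionsOf (n + 1) with addBox f l, (dimY f : ℝ) / dimY l * rho l :=
    finsum_mem_eq_sum_partitionsOf (fun l hl ↦ hrho l (right_ne_zero_of_mul hl)) {l | addBox f l}
  calc ∑ᶠ f ∈ U, projStep rho f
      = ∑ f ∈ partitionsOf n with f ∈ U, ∑ l ∈ partitionsOf (n + 1) with addBox f l,
          (dimY f : ℝ) / dimY l * rho l := by
        rw [finsum_mem_eq_sum_partitionsOf fun f ↦ isPartitionOf_of_projStep_ne_zero hrho]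
        exact sum_congr rfl fun f _ ↦ hproj f
    _ = ∑ l ∈ partitionsOf (n + 1), ∑ f ∈ partitionsOf n with f ∈ U ∧ addBox f l,
          (dimY f : ℝ) / dimY l * rho l :=
        sum_comm' fun f l ↦ by simp only [mem_filter]; tauto
    _ = ∑ l ∈ partitionsOf (n + 1), removalMeasure l U * rho l :=
        sum_congr rfl fun l hl ↦ by
          rw [← sum_mul, sum_dimY_div_dimY_eq_removalMeasure (mem_partitionsOf.mp hl)]

theorem stochDom_projStep (hrho : ∀ f, rho f ≠ 0 → IsPartitionOf (n + 1) f)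
    (hrho' : ∀ f, rho' f ≠ 0 → IsPartitionOf (n + 1) f) (hdom : stochDom (n + 1) rho rho') :
    stochDom n (projStep rho) (projStep rho') := by
  classical
  intro U hU
  have hlevel (t : ℝ) : 0 ≤ ∑ l ∈ partitionsOf (n + 1) with t ≤ removalMeasure l U,
      (rho l - rho' l) := by
    have hupper : IsDominanceUpper (n + 1) {l | IsPartitionOf (n + 1) l ∧ t ≤ removalMeasure l U} :=
      fun a ha b hb hsize hba ↦
        ⟨⟨hb, hsize⟩, ha.2.trans (removalMeasure_le_of_dominates hU ha.1 ⟨hb, hsize⟩ hba)⟩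
    have hfinsum {sigma : (ℕ → ℕ) → ℝ} (hsigma : ∀ f, sigma f ≠ 0 → IsPartitionOf (n + 1) f) :
        ∑ᶠ l ∈ {l | IsPartitionOf (n + 1) l ∧ t ≤ removalMeasure l U}, sigma l =
          ∑ l ∈ partitionsOf (n + 1) with t ≤ removalMeasure l U, sigma l := by
      rw [finsum_mem_eq_sum_partitionsOf hsigma]
      exact sum_congr (filter_congr fun l hl ↦ and_iff_right (mem_partitionsOf.mp hl))
        fun _ _ ↦ rfl
    rw [sum_sub_distrib, sub_nonneg, ← hfinsum hrho, ← hfinsum hrho']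
    exact hdom _ hupper
  have := sum_mul_nonneg_of_superlevel (partitionsOf (n + 1)) (removalMeasure · U)
    (fun l ↦ rho l - rho' l) (fun l _ ↦ removalMeasure_nonneg l U) fun t _ ↦ hlevel t
  rw [finsum_mem_projStep hrho, finsum_mem_projStep hrho', ← sub_nonneg, ← sum_sub_distrib]
  simpa only [sub_zero, mul_sub] using this

theorem projection_preserves_stochastic_dominance_general {n k : ℕ} (hk : k ≤ n)
    {rho rho' : (ℕ → ℕ) → ℝ} (hrho : ∀ f, rho f ≠ 0 → IsPartitionOf n f)
    (hrho' : ∀ f, rho' f ≠ 0 → IsPartitionOf n f) (hdom : stochDom n rho rho') :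
    stochDom k (projStep^[n - k] rho) (projStep^[n - k] rho') := by
  obtain ⟨m, rfl⟩ := Nat.exists_eq_add_of_le hk
  rw [Nat.add_sub_cancel_left]
  induction m generalizing rho rho' with
  | zero => exact hdom
  | succ m ih =>
    exact ih (k.le_add_right m) (fun f ↦ isPartitionOf_of_projStep_ne_zero hrho)
      (fun f ↦ isPartitionOf_of_projStep_ne_zero hrho') (stochDom_projStep hrho hrho' hdom)

end Projection

theorem projection_preserves_stochastic_dominance (n k : ℕ) (hk : k < n)
    (rho rho' : (ℕ → ℕ) → ℝ)
    (hrho : isMeasureOn n rho) (hrho' : isMeasureOn n rho')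
    (hmass : ∑ᶠ f, rho f = ∑ᶠ f, rho' f)
    (hdom : stochDom n rho rho') :
    stochDom k (projStep^[n - k] rho) (projStep^[n - k] rho') :=
  projection_preserves_stochastic_dominance_general hk.le hrho.2 hrho'.2 hdom
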